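/- arXiv:1704.06430 — 2 statements merged into one kernel-verified Lean document; each statement's English description precedes it below -/
import Mathlib

section
/- Let N ≥ 1, and let (u, v) be a classical solution of the system (P_Λ) with Λ = 3 (no sign assumption on u, v), satisfying condition (h∞). Then there exists α ∈ ℝ such that u(x) = (1 + tanh((x_N + α)/√2))/2 and v(x) = (1 − tanh((x_N + α)/√2))/2 for every x ∈ ℝ^N; in particular u and v are 1-dimensional and monotone, and the solution is unique up to translations. -/
open scoped RealInnerProductSpace
open Filter

noncomputable section

/-- The Laplacian of `f : ℝ^N → ℝ`, as the sum of the pure second partial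
derivatives in the coordinate directions. -/
def lap (N : ℕ) (f : EuclideanSpace ℝ (Fin N) → ℝ) (x : EuclideanSpace ℝ (Fin N)) : ℝ :=
  ∑ i : Fin N,
    fderiv ℝ (fun y => fderiv ℝ f y (EuclideanSpace.single i 1)) x (EuclideanSpace.single i 1)

/-- `(u, v)` is a classical solution of the system `(P_Λ)` on `ℝ^N`:
`u, v` are `C²` and `-Δu = u - u³ - Λ u v²`, `-Δv = v - v³ - Λ u² v` pointwise. -/
def IsSolution (N : ℕ) (Λ : ℝ) (u v : EuclideanSpace ℝ (Fin N) → ℝ) : Prop :=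
  ContDiff ℝ 2 u ∧ ContDiff ℝ 2 v ∧
  (∀ x, -lap N u x = u x - (u x) ^ 3 - Λ * u x * (v x) ^ 2) ∧
  (∀ x, -lap N v x = v x - (v x) ^ 3 - Λ * (u x) ^ 2 * v x)

/-- Condition `(h∞)`: `u → 1`, `v → 0` as `x_N → +∞` and `u → 0`, `v → 1` as
`x_N → -∞`, uniformly with respect to `x' ∈ ℝ^{N-1}` (the dimension is `N + 1`). -/
def Hinf (N : ℕ) (u v : EuclideanSpace ℝ (Fin (N + 1)) → ℝ) : Prop :=
  (∀ ε : ℝ, 0 < ε → ∃ M : ℝ, ∀ x : EuclideanSpace ℝ (Fin (N + 1)),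
    M ≤ x (Fin.last N) → |u x - 1| < ε ∧ |v x| < ε) ∧
  (∀ ε : ℝ, 0 < ε → ∃ M : ℝ, ∀ x : EuclideanSpace ℝ (Fin (N + 1)),
    x (Fin.last N) ≤ M → |u x| < ε ∧ |v x - 1| < ε)

/-!
For `Λ = 3` the combinations `s = u + v` and `d = u - v` decouple: each solves the bistable scalar
equation `Δf = f³ - f`, and the conditions at infinity become `s → 1` at both ends, `d → ±1`.
A Keller–Osserman barrier shows that every entire solution takes values in `[-1, 1]`.
Near `±1` the nonlinearity is increasing, so that ordered solutions stay ordered there by the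
maximum principle; in between, a lower bound on strips for positive solutions of a linear
differential inequality replaces compactness and lets a family of solutions be slid down to its
first contact. Sliding `d` over its own translates shows that `d` depends only on `⟪e, x⟫`, and
sliding it over the front `tanh (⟪e, x⟫ / √2)` identifies it with a translate of the front.
Sliding `s` over the front shows that `s` lies above every translate of it, so `s = 1`.
-/

open Laplacian InnerProductSpace Set Topology

section Laplacian

theorem deriv_deriv_nonneg_of_isLocalMin {φ : ℝ → ℝ} {t : ℝ} (hmin : IsLocalMin φ t)
    (hc : ContinuousAt φ t) : 0 ≤ deriv (deriv φ) t := by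
  by_contra! hneg
  have hmax : IsLocalMax φ t := isLocalMax_of_deriv_deriv_neg hneg hmin.deriv_eq_zero hc
  have hconst : φ =ᶠ[𝓝 t] fun _ ↦ φ t := by
    filter_upwards [hmin, hmax] with s h₁ h₂ using le_antisymm h₂ h₁
  have hzero : deriv (deriv φ) t = 0 := by
    simpa using hconst.deriv.deriv_eq
  exact hneg.ne hzero

variable {E : Type*} [NormedAddCommGroup E] [InnerProductSpace ℝ E]

theorem iteratedFDeriv_two_eq_deriv_deriv_line {f : E → ℝ} {x : E} (hf : ContDiffAt ℝ 2 f x)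
    (v : E) : iteratedFDeriv ℝ 2 f x ![v, v] = deriv (deriv fun t : ℝ ↦ f (x + t • v)) 0 := by
  have hline (t : ℝ) : HasDerivAt (fun t : ℝ ↦ x + t • v) v t := by
    simpa using ((hasDerivAt_id t).smul_const v).const_add x
  have hx : x + (0 : ℝ) • v = x := by simp
  have hdiff : ∀ᶠ y in 𝓝 (x + (0 : ℝ) • v), DifferentiableAt ℝ f y := by
    rw [hx]
    exact (hf.eventually (by simp)).mono fun y hy ↦ hy.differentiableAt two_ne_zero
  have hfirst : deriv (fun t : ℝ ↦ f (x + t • v)) =ᶠ[𝓝 0] fun t ↦ fderiv ℝ f (x + t • v) v := by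
    filter_upwards [(hline 0).continuousAt.eventually hdiff] with t ht
    exact (ht.hasFDerivAt.comp_hasDerivAt t (hline t)).deriv
  have hfderiv : HasFDerivAt (fderiv ℝ f) (fderiv ℝ (fderiv ℝ f) x) (x + (0 : ℝ) • v) := by
    rw [hx]
    exact ((hf.fderiv_right (m := 1) le_rfl).differentiableAt one_ne_zero).hasFDerivAt
  have hsecond : HasDerivAt (fun t : ℝ ↦ fderiv ℝ f (x + t • v)) (fderiv ℝ (fderiv ℝ f) x v) 0 :=
    hfderiv.comp_hasDerivAt 0 (hline 0)
  have hsecond' : HasDerivAt (fun t : ℝ ↦ fderiv ℝ f (x + t • v) v)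
      (fderiv ℝ (fderiv ℝ f) x v v) 0 := by
    simpa using hsecond.clm_apply (hasDerivAt_const (0 : ℝ) v)
  rw [hfirst.deriv_eq, iteratedFDeriv_two_apply, hsecond'.deriv]
  simp

theorem contDiff_norm_sub_sq (y : E) : ContDiff ℝ 2 fun z ↦ ‖z - y‖ ^ 2 :=
  (contDiff_id.sub contDiff_const).norm_sq ℝ

variable [FiniteDimensional ℝ E]

theorem laplacian_nonneg_of_isLocalMin {f : E → ℝ} {x : E} (hmin : IsLocalMin f x)
    (hf : ContDiffAt ℝ 2 f x) : 0 ≤ Δ f x := by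
  rw [laplacian_eq_iteratedFDeriv_stdOrthonormalBasis]
  refine Finset.sum_nonneg fun i _ ↦ ?_
  set v := stdOrthonormalBasis ℝ E i
  have hline : Tendsto (fun t : ℝ ↦ x + t • v) (𝓝 0) (𝓝 x) :=
    Continuous.tendsto' (by fun_prop) 0 x (by simp)
  rw [iteratedFDeriv_two_eq_deriv_deriv_line hf]
  refine deriv_deriv_nonneg_of_isLocalMin ?_ ?_
  · filter_upwards [hline.eventually hmin] with t ht using by simpa using ht
  · simpa [ContinuousAt, Function.comp_def] using hf.continuousAt.tendsto.comp hline

theorem laplacian_comp_add_right (f : E → ℝ) (a x : E) :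
    Δ (fun y ↦ f (y + a)) x = Δ f (x + a) := by
  simp only [laplacian_eq_iteratedFDeriv_stdOrthonormalBasis, iteratedFDeriv_comp_add_right]

theorem laplacian_comp_linearIsometryEquiv {f : E → ℝ} (A : E ≃ₗᵢ[ℝ] E) {x : E}
    (hf : ContDiffAt ℝ 2 f (A x)) : Δ (fun y ↦ f (A y)) x = Δ f (A x) := by
  rw [laplacian_eq_iteratedFDeriv_stdOrthonormalBasis,
    laplacian_eq_iteratedFDeriv_orthonormalBasis f ((stdOrthonormalBasis ℝ E).map A)]
  refine Finset.sum_congr rfl fun i _ ↦ ?_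
  rw [iteratedFDeriv_two_eq_deriv_deriv_line hf,
    iteratedFDeriv_two_eq_deriv_deriv_line (f := fun y ↦ f (A y))
      (hf.comp x A.contDiff.contDiffAt)]
  simp

theorem laplacian_comp {g g' : ℝ → ℝ} {g'' : ℝ} {h : E → ℝ} {x v : E}
    (hg : ∀ᶠ t in 𝓝 (h x), HasDerivAt g (g' t) t) (hg' : HasDerivAt g' g'' (h x))
    (hh : ContDiffAt ℝ 2 h x) (hv : HasGradientAt h v x) :
    Δ (fun y ↦ g (h y)) x = g'' * ‖v‖ ^ 2 + g' (h x) * Δ h x := by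
  have hfirst : fderiv ℝ (fun y ↦ g (h y)) =ᶠ[𝓝 x] fun y ↦ g' (h y) • fderiv ℝ h y := by
    filter_upwards [hh.continuousAt.eventually hg, hh.eventually (by simp)] with y hgy hhy
    exact (hgy.comp_hasFDerivAt y (hhy.differentiableAt two_ne_zero).hasFDerivAt).fderiv
  have hcoef : HasFDerivAt (fun y ↦ g' (h y)) (g'' • fderiv ℝ h x) x :=
    hg'.comp_hasFDerivAt x (hh.differentiableAt two_ne_zero).hasFDerivAt
  have hfderiv : DifferentiableAt ℝ (fderiv ℝ h) x :=
    (hh.fderiv_right (m := 1) le_rfl).differentiableAt one_ne_zero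
  have hbasis (w : E) : iteratedFDeriv ℝ 2 (fun y ↦ g (h y)) x ![w, w] =
      g'' * ⟪v, w⟫ ^ 2 + g' (h x) * iteratedFDeriv ℝ 2 h x ![w, w] := by
    simp only [iteratedFDeriv_two_apply, hfirst.fderiv_eq]
    rw [(hcoef.fun_smul hfderiv.hasFDerivAt).fderiv]
    simp only [Matrix.cons_val_zero, Matrix.cons_val_one, add_apply, smul_apply,
      ContinuousLinearMap.smulRight_apply, hv.fderiv_apply, smul_eq_mul]
    ring
  simp only [laplacian_eq_iteratedFDeriv_stdOrthonormalBasis, hbasis, Finset.sum_add_distrib,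
    ← Finset.mul_sum, (stdOrthonormalBasis ℝ E).sum_sq_inner_left v]

theorem hasGradientAt_norm_sub_sq (x y : E) :
    HasGradientAt (fun z ↦ ‖z - y‖ ^ 2) ((2 : ℝ) • (x - y)) x := by
  rw [hasGradientAt_iff_hasFDerivAt]
  refine ((hasFDerivAt_id x).sub_const y).norm_sq.congr_fderiv ?_
  ext; simp

theorem laplacian_norm_sub_sq (x y : E) :
    Δ (fun z ↦ ‖z - y‖ ^ 2) x = 2 * Module.finrank ℝ E := by
  have hgrad : fderiv ℝ (fun z ↦ ‖z - y‖ ^ 2) = fun z ↦ (2 : ℝ) • innerSL ℝ (z - y) := by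
    ext z w
    rw [(hasGradientAt_norm_sub_sq z y).fderiv_apply, real_inner_smul_left]
    rfl
  have hbasis (w : E) : iteratedFDeriv ℝ 2 (fun z ↦ ‖z - y‖ ^ 2) x ![w, w] = 2 * ‖w‖ ^ 2 := by
    have hsecond : HasFDerivAt (fun z ↦ (2 : ℝ) • innerSL ℝ (z - y)) ((2 : ℝ) • innerSL ℝ) x :=
      ((innerSL ℝ).hasFDerivAt.comp x ((hasFDerivAt_id x).sub_const y)).const_smul (2 : ℝ)
    rw [iteratedFDeriv_two_apply, hgrad, hsecond.fderiv]
    exact congrArg (2 * ·) (real_inner_self_eq_norm_sq w)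
  simp [laplacian_eq_iteratedFDeriv_stdOrthonormalBasis, hbasis, mul_comm]

theorem laplacian_inner (e x : E) : Δ (fun z ↦ ⟪e, z⟫) x = 0 := by
  have hgrad : fderiv ℝ (fun z ↦ ⟪e, z⟫) = fun _ ↦ innerSL ℝ e :=
    funext fun z ↦ (innerSL ℝ e).hasFDerivAt.fderiv
  simp [laplacian_eq_iteratedFDeriv_stdOrthonormalBasis, iteratedFDeriv_two_apply, hgrad]

theorem laplacian_comp_norm_sub_sq {g g' : ℝ → ℝ} {g'' : ℝ} {x y : E}
    (hg : ∀ᶠ t in 𝓝 (‖x - y‖ ^ 2), HasDerivAt g (g' t) t)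
    (hg' : HasDerivAt g' g'' (‖x - y‖ ^ 2)) :
    Δ (fun z ↦ g (‖z - y‖ ^ 2)) x =
      4 * g'' * ‖x - y‖ ^ 2 + 2 * Module.finrank ℝ E * g' (‖x - y‖ ^ 2) := by
  rw [laplacian_comp (h := fun z ↦ ‖z - y‖ ^ 2) hg hg' (contDiff_norm_sub_sq y).contDiffAt
    (hasGradientAt_norm_sub_sq x y), laplacian_norm_sub_sq, norm_smul, Real.norm_ofNat]
  ring

theorem laplacian_comp_inner {g g' : ℝ → ℝ} {g'' : ℝ} {e x : E}
    (hg : ∀ᶠ t in 𝓝 ⟪e, x⟫, HasDerivAt g (g' t) t) (hg' : HasDerivAt g' g'' ⟪e, x⟫) :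
    Δ (fun z ↦ g ⟪e, z⟫) x = g'' * ‖e‖ ^ 2 := by
  have hgrad : HasGradientAt (fun z ↦ ⟪e, z⟫) e x := (innerSL ℝ e).hasFDerivAt
  rw [laplacian_comp hg hg' (contDiff_const.inner ℝ contDiff_id).contDiffAt hgrad,
    laplacian_inner, mul_zero, add_zero]

end Laplacian

section MaximumPrinciple

variable {E : Type*} [NormedAddCommGroup E] [InnerProductSpace ℝ E] [FiniteDimensional ℝ E]

/- The penalised function `w + ε‖· - x₀‖²` attains its minimum on `Ω`. -/
theorem nonneg_on_of_laplacian_le {w : E → ℝ} {Ω : Set E} {B c : ℝ} (hw : ContDiff ℝ 2 w)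
    (hΩ : IsClosed Ω) (hc : 0 < c) (hB : ∀ x ∈ Ω, -B ≤ w x)
    (hle : ∀ x ∈ Ω, w x < 0 → Ω ∈ 𝓝 x ∧ Δ w x ≤ c * w x) : ∀ x ∈ Ω, 0 ≤ w x := by
  intro x₀ hx₀
  by_contra! hneg
  obtain ⟨ε, hε, hεn⟩ : ∃ ε > 0, 2 * Module.finrank ℝ E * ε < -(c * w x₀) :=
    exists_pos_mul_lt (neg_pos.2 (mul_neg_of_pos_of_neg hc hneg)) _
  set q : E → ℝ := fun z ↦ ‖z - x₀‖ ^ 2 with hq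
  have hqC : ContDiff ℝ 2 q := contDiff_norm_sub_sq x₀
  have hcoercive : Tendsto (fun z ↦ -B + ε * q z) (cocompact E) atTop := by
    refine tendsto_atTop_add_const_left _ _ (Tendsto.const_mul_atTop hε ?_)
    simpa [hq, Function.comp_def, dist_eq_norm] using
      (tendsto_pow_atTop two_ne_zero).comp (tendsto_dist_right_cocompact_atTop x₀)
  obtain ⟨y, hyΩ, hymin⟩ : ∃ y ∈ Ω, IsMinOn (w + ε • q) Ω y := by
    refine (hw.continuous.add (hqC.continuous.const_smul ε)).continuousOn.exists_isMinOn' hΩ hx₀ ?_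
    filter_upwards [(hcoercive.eventually_ge_atTop (w x₀)).filter_mono inf_le_left,
      mem_inf_of_right (mem_principal_self Ω)] with z hz hzΩ
    have := hB z hzΩ
    simp only [Pi.add_apply, Pi.smul_apply, smul_eq_mul, hq, sub_self, norm_zero] at hz ⊢
    linarith
  have hyle : w y + ε * q y ≤ w x₀ := by simpa [hq] using hymin hx₀
  have hεq : 0 ≤ ε * q y := by positivity
  have hεqC : ContDiffAt ℝ 2 (ε • q) y := hqC.contDiffAt.const_smul ε
  obtain ⟨hnhds, hΔ⟩ := hle y hyΩ (by linarith)
  have hmin : 0 ≤ Δ (w + ε • q) y := laplacian_nonneg_of_isLocalMin (hymin.isLocalMin hnhds)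
    (hw.contDiffAt.add hεqC)
  rw [hw.contDiffAt.laplacian_add hεqC,
    laplacian_smul _ hqC.contDiffAt, hq, laplacian_norm_sub_sq, smul_eq_mul] at hmin
  nlinarith [mul_le_mul_of_nonneg_left (hyle.trans' (le_add_of_nonneg_right hεq)) hc.le]

theorem laplacian_const_div_sub_norm_sub_sq {S : ℝ} (P : ℝ) {x y : E} (h : ‖x - y‖ ^ 2 < S) :
    Δ (fun z ↦ P / (S - ‖z - y‖ ^ 2)) x =
      (8 * ‖x - y‖ ^ 2 + 2 * Module.finrank ℝ E * (S - ‖x - y‖ ^ 2)) * P /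
        (S - ‖x - y‖ ^ 2) ^ 3 := by
  have hderiv {t : ℝ} (ht : t < S) : HasDerivAt (fun t ↦ P / (S - t)) (P / (S - t) ^ 2) t := by
    have := ((hasDerivAt_id t).const_sub S).fun_inv (sub_pos.2 ht).ne' |>.const_mul P
    simpa [div_eq_mul_inv] using this
  have hne : S - ‖x - y‖ ^ 2 ≠ 0 := (sub_pos.2 h).ne'
  have hderiv' : HasDerivAt (fun t ↦ P / (S - t) ^ 2) (2 * P / (S - ‖x - y‖ ^ 2) ^ 3)
      (‖x - y‖ ^ 2) := by
    have := (((hasDerivAt_id (‖x - y‖ ^ 2)).const_sub S).fun_pow 2).fun_inv (pow_ne_zero 2 hne)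
      |>.const_mul P
    refine (this.congr_deriv ?_).congr_of_eventuallyEq (.of_forall fun t ↦ div_eq_mul_inv _ _)
    simp only [id, Nat.cast_ofNat, Nat.add_one_sub_one, pow_one]
    field_simp
  rw [laplacian_comp_norm_sub_sq ((gt_mem_nhds h).mono fun t ht ↦ hderiv ht) hderiv']
  field_simp
  ring

/- At a maximum point of `(R² - ‖· - x₀‖²) * g` the barrier `P / (R² - ‖· - x₀‖²)` touches `g` from
above. -/
theorem sq_mul_sq_le_of_cube_le_laplacian {g : E → ℝ} {x₀ : E} {R : ℝ} (hR : 0 < R)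
    (hg : ContDiff ℝ 2 g) (hx₀ : 0 < g x₀) (hcube : ∀ x, 0 < g x → g x ^ 3 ≤ Δ g x) :
    R ^ 2 * g x₀ ^ 2 ≤ 2 * Module.finrank ℝ E + 8 := by
  set n : ℝ := (Module.finrank ℝ E : ℝ)
  set η : E → ℝ := fun z ↦ R ^ 2 - ‖z - x₀‖ ^ 2 with hη
  have hηC : ContDiff ℝ 2 η := contDiff_const.sub (contDiff_norm_sub_sq x₀)
  have hη_nonneg {z : E} : 0 ≤ η z ↔ z ∈ Metric.closedBall x₀ R := by
    rw [sub_nonneg, sq_le_sq₀ (norm_nonneg _) hR.le, mem_closedBall_iff_norm]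
  obtain ⟨y, hy, hymax⟩ := (isCompact_closedBall x₀ R).exists_isMaxOn
    ⟨x₀, Metric.mem_closedBall_self hR.le⟩ (hηC.continuous.mul hg.continuous).continuousOn
  set P := η y * g y
  have hPx₀ : R ^ 2 * g x₀ ≤ P := by
    simpa [hη] using hymax (Metric.mem_closedBall_self hR.le)
  have hP : 0 < P := hPx₀.trans_lt' (by positivity)
  have hηy : 0 < η y := (hη_nonneg.2 hy).lt_of_ne fun h ↦ by simp [P, ← h] at hP
  have hgy : g y = P / η y := (mul_div_cancel_left₀ _ hηy.ne').symm
  have hmin : IsLocalMin ((fun z ↦ P / η z) - g) y := by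
    filter_upwards [hηC.continuous.continuousAt.eventually (lt_mem_nhds hηy)] with z hz
    have : g z ≤ P / η z := (le_div_iff₀' hz).2 (hymax (hη_nonneg.1 hz.le))
    simpa [hgy] using this
  have hbarrier : ContDiffAt ℝ 2 (fun z ↦ P / η z) y :=
    contDiffAt_const.div hηC.contDiffAt hηy.ne'
  have htest : P ^ 3 / η y ^ 3 ≤ (8 * ‖y - x₀‖ ^ 2 + 2 * n * η y) * P / η y ^ 3 := by
    have hΔ := laplacian_nonneg_of_isLocalMin hmin (hbarrier.sub hg.contDiffAt)
    rw [hbarrier.laplacian_sub hg.contDiffAt, hη,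
      laplacian_const_div_sub_norm_sub_sq P (sub_pos.1 hηy)] at hΔ
    rw [← div_pow, ← hgy]
    exact (hcube y (hgy ▸ by positivity)).trans (sub_nonneg.1 hΔ)
  have hηle : η y ≤ R ^ 2 := sub_le_self _ (sq_nonneg _)
  have hP2 : P ^ 2 ≤ (2 * n + 8) * R ^ 2 := by
    rw [div_le_div_iff_of_pos_right (by positivity), pow_succ] at htest
    have := le_of_mul_le_mul_right htest hP
    have : 8 * ‖y - x₀‖ ^ 2 ≤ 8 * R ^ 2 := by linarith [show η y = R ^ 2 - ‖y - x₀‖ ^ 2 from rfl]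
    have : 2 * n * η y ≤ 2 * n * R ^ 2 := by gcongr
    linarith
  have hsq : (R ^ 2 * g x₀) ^ 2 ≤ (2 * n + 8) * R ^ 2 := hP2.trans' (by gcongr)
  refine le_of_mul_le_mul_right (hsq.trans_eq' ?_) (pow_pos hR 2)
  ring

theorem nonpos_of_cube_le_laplacian {g : E → ℝ} (hg : ContDiff ℝ 2 g)
    (hcube : ∀ x, 0 < g x → g x ^ 3 ≤ Δ g x) (x : E) : g x ≤ 0 := by
  by_contra! hx
  have hlim : Tendsto (fun R ↦ R ^ 2 * g x ^ 2) atTop atTop :=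
    (tendsto_pow_atTop two_ne_zero).atTop_mul_const (by positivity)
  obtain ⟨R, hR, hlt⟩ :=
    ((eventually_gt_atTop 0).and (hlim.eventually_gt_atTop (2 * Module.finrank ℝ E + 8))).exists
  exact (sq_mul_sq_le_of_cube_le_laplacian hR hg hx hcube).not_gt hlt

theorem laplacian_exp_neg_mul_norm_sub_sq (a : ℝ) (x y : E) :
    Δ (fun z ↦ Real.exp (-a * ‖z - y‖ ^ 2)) x =
      (4 * a ^ 2 * ‖x - y‖ ^ 2 - 2 * a * Module.finrank ℝ E) * Real.exp (-a * ‖x - y‖ ^ 2) := by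
  have hderiv (t : ℝ) : HasDerivAt (fun t ↦ Real.exp (-a * t)) (-a * Real.exp (-a * t)) t := by
    simpa [mul_comm] using ((hasDerivAt_id t).const_mul (-a)).exp
  rw [laplacian_comp_norm_sub_sq (.of_forall hderiv) ((hderiv _).const_mul (-a))]
  ring

theorem mul_exp_le_of_laplacian_le {w : E → ℝ} {y : E} {C δ ρ a : ℝ} (hw : ContDiff ℝ 2 w)
    (hnonneg : ∀ x, 0 ≤ w x) (hC : 0 < C) (hΔ : ∀ x, Δ w x ≤ C * w x) (hδ : 0 ≤ δ) (ha : 0 ≤ a)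
    (hρ : 0 ≤ ρ) (hball : ∀ x, ‖x - y‖ ≤ ρ → δ ≤ w x)
    (haρ : C + 2 * a * Module.finrank ℝ E ≤ 4 * a ^ 2 * ρ ^ 2) (x : E) :
    δ * Real.exp (-a * ‖x - y‖ ^ 2) ≤ w x := by
  set G : E → ℝ := fun z ↦ Real.exp (-a * ‖z - y‖ ^ 2)
  have hGC : ContDiff ℝ 2 G := (contDiff_const.mul (contDiff_norm_sub_sq y)).exp
  have hδG : ContDiff ℝ 2 (δ • G) := contDiff_const.smul hGC
  have hGδ (z : E) : δ * G z ≤ δ :=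
    mul_le_of_le_one_right hδ (Real.exp_le_one_iff.2 (by nlinarith [sq_nonneg ‖z - y‖]))
  have hGball {z : E} (hz : ‖z - y‖ ≤ ρ) : δ * G z ≤ w z := (hGδ z).trans (hball z hz)
  have hΔG {z : E} (hz : ρ ≤ ‖z - y‖) : C * G z ≤ Δ G z := by
    rw [laplacian_exp_neg_mul_norm_sub_sq]
    have : 4 * a ^ 2 * ρ ^ 2 ≤ 4 * a ^ 2 * ‖z - y‖ ^ 2 := by gcongr
    exact mul_le_mul_of_nonneg_right (by linarith) (Real.exp_nonneg _)
  have hcompare : ∀ z ∈ {z | ρ ≤ ‖z - y‖}, 0 ≤ (w - δ • G) z := by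
    refine nonneg_on_of_laplacian_le (B := δ) (hw.sub hδG)
      (isClosed_le continuous_const (by fun_prop)) hC (fun z _ ↦ ?_) fun z hz hneg ↦ ?_
    · exact (neg_le_sub_iff_le_add.2 ((hGδ z).trans (le_add_of_nonneg_left (hnonneg z))))
    · have hlt : ρ < ‖z - y‖ := by
        by_contra! hle
        exact (sub_nonneg.2 (hGball hle)).not_gt hneg
      have hcont : Continuous fun z ↦ ‖z - y‖ := by fun_prop
      refine ⟨(hcont.continuousAt.eventually (lt_mem_nhds hlt)).mono fun z hz ↦ hz.le, ?_⟩
      rw [hw.contDiffAt.laplacian_sub hδG.contDiffAt, laplacian_smul _ hGC.contDiffAt]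
      simp only [Pi.sub_apply, Pi.smul_apply, smul_eq_mul]
      linarith [hΔ z, mul_le_mul_of_nonneg_left (hΔG hz) hδ]
  rcases le_total ‖x - y‖ ρ with hle | hge
  · exact hGball hle
  · exact sub_nonneg.1 (hcompare x hge)

theorem exists_pos_forall_le_of_laplacian_le {w : E → ℝ} {C δ R : ℝ} {K : NNReal}
    (hw : ContDiff ℝ 2 w) (hnonneg : ∀ x, 0 ≤ w x) (hlip : LipschitzWith K w) (hC : 0 < C)
    (hΔ : ∀ x, Δ w x ≤ C * w x) (hδ : 0 < δ) :
    ∃ c > 0, ∀ x y, ‖x - y‖ ≤ R → δ ≤ w y → c ≤ w x := by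
  obtain ⟨ρ, hρ, hKρ⟩ : ∃ ρ > 0, K * ρ < δ / 2 := exists_pos_mul_lt (half_pos hδ) _
  set n : ℝ := (Module.finrank ℝ E : ℝ)
  have hn : 0 ≤ n := Nat.cast_nonneg _
  set a := (n + C) / ρ ^ 2 + 1 with hadef
  have ha : 1 ≤ a := le_add_of_nonneg_left (by positivity)
  have haρ : C + 2 * a * n ≤ 4 * a ^ 2 * ρ ^ 2 := by
    have hnC : n + C ≤ a * ρ ^ 2 := by
      rw [hadef, add_mul, div_mul_cancel₀ _ (by positivity)]
      exact le_add_of_nonneg_right (by positivity)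
    nlinarith [mul_le_mul_of_nonneg_left hnC (zero_le_one.trans ha),
      mul_le_mul_of_nonneg_right ha hC.le, mul_nonneg (zero_le_one.trans ha) hn]
  refine ⟨δ / 2 * Real.exp (-a * R ^ 2), by positivity, fun x y hxy hy ↦ ?_⟩
  have hball (z : E) (hz : ‖z - y‖ ≤ ρ) : δ / 2 ≤ w z := by
    have hdist := hlip.dist_le_mul_of_le ((dist_comm y z).trans_le ((dist_eq_norm z y).trans_le hz))
    rw [Real.dist_eq] at hdist
    linarith [le_abs_self (w y - w z)]
  refine (mul_exp_le_of_laplacian_le hw hnonneg hC hΔ (by positivity) (by positivity) hρ.le hball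
    haρ x).trans' ?_
  have hsq : ‖x - y‖ ^ 2 ≤ R ^ 2 := by gcongr
  have : -a * R ^ 2 ≤ -a * ‖x - y‖ ^ 2 :=
    mul_le_mul_of_nonpos_left hsq (neg_nonpos.2 (by positivity))
  gcongr

theorem le_mul_of_abs_laplacian_le {g : E → ℝ} {A B : ℝ} {e : E} (hg : ContDiff ℝ 2 g)
    (hA : ∀ x, |g x| ≤ A) (hB : ∀ x, |Δ g x| ≤ B) (he : ‖e‖ = 1) (h₀ : ∀ x, ⟪e, x⟫ = 0 → g x ≤ 0)
    {x : E} (hx : ⟪e, x⟫ ∈ Icc (0 : ℝ) 1) : g x ≤ (A + B) * (2 * ⟪e, x⟫ - ⟪e, x⟫ ^ 2) := by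
  set c := A + B
  have hA₀ : 0 ≤ A := (abs_nonneg _).trans (hA 0)
  have hB₀ : 0 ≤ B := (abs_nonneg _).trans (hB 0)
  set b : E → ℝ := fun x ↦ c * (2 * ⟪e, x⟫ - ⟪e, x⟫ ^ 2) with hb
  have hbC : ContDiff ℝ 2 b := by
    have : ContDiff ℝ 2 fun x ↦ ⟪e, x⟫ := contDiff_const.inner ℝ contDiff_id
    fun_prop
  have hΔb (x : E) : Δ b x = -(2 * c) := by
    have hderiv (t : ℝ) : HasDerivAt (fun t ↦ c * (2 * t - t ^ 2)) (c * (2 - 2 * t)) t := by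
      have := ((hasDerivAt_id t).const_mul 2).fun_sub ((hasDerivAt_id t).fun_pow 2)
      simpa using this.const_mul c
    have hderiv' (t : ℝ) : HasDerivAt (fun t ↦ c * (2 - 2 * t)) (-(2 * c)) t := by
      simpa [mul_comm] using (((hasDerivAt_id t).const_mul 2).const_sub 2).const_mul c
    rw [hb, laplacian_comp_inner (.of_forall hderiv) (hderiv' _), he, one_pow, mul_one]
  have hb₀ {x : E} (hx : ⟪e, x⟫ ∈ Icc (0 : ℝ) 1) : 0 ≤ b x :=
    mul_nonneg (by positivity) (by nlinarith [hx.1, hx.2])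
  have hslab : IsClosed {x : E | ⟪e, x⟫ ∈ Icc (0 : ℝ) 1} := isClosed_Icc.preimage (by fun_prop)
  refine sub_nonneg.1 (nonneg_on_of_laplacian_le (w := b - g) (B := A) (hbC.sub hg) hslab
    zero_lt_one (fun x hx ↦ ?_) (fun x hx hneg ↦ ?_) x hx)
  · exact neg_le_sub_iff_le_add.2 ((le_of_abs_le (hA x)).trans (le_add_of_nonneg_left (hb₀ hx)))
  · have hbg : b x < g x := sub_neg.1 hneg
    have hx₀ : ⟪e, x⟫ ≠ 0 := fun h ↦ (hbg.trans_le (h₀ x h)).not_ge (hb₀ hx)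
    have hx₁ : ⟪e, x⟫ ≠ 1 := fun h ↦ by
      have : b x = A + B := by simp only [hb, h]; ring
      linarith [le_of_abs_le (hA x)]
    have hcont : Continuous fun x ↦ ⟪e, x⟫ := by fun_prop
    refine ⟨hcont.continuousAt.preimage_mem_nhds
      (Icc_mem_nhds (hx.1.lt_of_ne' hx₀) (hx.2.lt_of_ne hx₁)), ?_⟩
    rw [hbC.contDiffAt.laplacian_sub hg.contDiffAt, hΔb, one_mul]
    linarith [neg_le_of_abs_le (hB x), hb₀ hx, le_of_abs_le (hA x),
      (Pi.sub_apply b g x : (b - g) x = b x - g x)]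

/- `f` is compared with its reflection across the hyperplane bisecting the segment. -/
theorem sub_le_mul_of_abs_laplacian_le {f : E → ℝ} {A B s : ℝ} {e : E} (hf : ContDiff ℝ 2 f)
    (hA : ∀ x, |f x| ≤ A) (hB : ∀ x, |Δ f x| ≤ B) (he : ‖e‖ = 1) (p : E) (hs : s ∈ Icc (0 : ℝ) 1) :
    f (s • e + p) - f (-(s • e) + p) ≤ 2 * (A + B) * (2 * s) := by
  set σ := (ℝ ∙ e)ᗮ.reflection
  set g : E → ℝ := fun x ↦ f (x + p)
  have hgC : ContDiff ℝ 2 g := hf.comp (contDiff_id.add contDiff_const)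
  have hgσC : ContDiff ℝ 2 (g ∘ σ) := hgC.comp σ.contDiff
  have hΔ (x : E) : Δ (g - g ∘ σ) x = Δ f (x + p) - Δ f (σ x + p) := by
    rw [hgC.contDiffAt.laplacian_sub hgσC.contDiffAt, Function.comp_def,
      laplacian_comp_linearIsometryEquiv σ hgC.contDiffAt, laplacian_comp_add_right,
      laplacian_comp_add_right]
  have hσ₀ (x : E) (hx : ⟪e, x⟫ = 0) : (g - g ∘ σ) x ≤ 0 := by
    have : σ x = x :=
      Submodule.reflection_mem_subspace_eq_self
        (Submodule.mem_orthogonal_singleton_iff_inner_right.2 hx)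
    simp [this]
  have hinner : ⟪e, s • e⟫ = s := by simp [real_inner_smul_right, he]
  have hσe : σ (s • e) = -(s • e) := by
    rw [map_smul, Submodule.reflection_orthogonalComplement_singleton_eq_neg, smul_neg]
  have hle := le_mul_of_abs_laplacian_le (A := A + A) (B := B + B) (g := g - g ∘ σ) (hgC.sub hgσC)
    (fun x ↦ (abs_sub _ _).trans (add_le_add (hA _) (hA _)))
    (fun x ↦ by rw [hΔ]; exact (abs_sub _ _).trans (add_le_add (hB _) (hB _))) he hσ₀
    (hinner.symm ▸ hs)
  rw [hinner, Pi.sub_apply, Function.comp_apply, hσe] at hle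
  have : 0 ≤ (A + B) * s ^ 2 := by
    have := (abs_nonneg _).trans (hA 0)
    have := (abs_nonneg _).trans (hB 0)
    positivity
  linarith

theorem lipschitzWith_of_abs_laplacian_le {f : E → ℝ} {A B : ℝ} (hf : ContDiff ℝ 2 f)
    (hA : ∀ x, |f x| ≤ A) (hB : ∀ x, |Δ f x| ≤ B) : LipschitzWith (2 * (A + B)).toNNReal f := by
  refine LipschitzWith.of_le_add_mul' _ fun x y ↦ ?_
  rw [dist_eq_norm, ← sub_le_iff_le_add']
  have hA₀ : 0 ≤ A := (abs_nonneg _).trans (hA 0)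
  have hB₀ : 0 ≤ B := (abs_nonneg _).trans (hB 0)
  rcases le_or_gt ‖x - y‖ 2 with hle | hgt
  · rcases eq_or_ne x y with rfl | hne
    · simp
    have hne' : ‖x - y‖ ≠ 0 := norm_ne_zero_iff.2 (sub_ne_zero.2 hne)
    set e := ‖x - y‖⁻¹ • (x - y) with he
    have he₁ : ‖e‖ = 1 := by simp [he, norm_smul, hne']
    have hhalf : (‖x - y‖ / 2) • e = (2 : ℝ)⁻¹ • (x - y) := by
      rw [he, smul_smul]
      congr 1
      field_simp
    have hx : (‖x - y‖ / 2) • e + (2 : ℝ)⁻¹ • (x + y) = x := by rw [hhalf]; module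
    have hy : -((‖x - y‖ / 2) • e) + (2 : ℝ)⁻¹ • (x + y) = y := by rw [hhalf]; module
    have h := sub_le_mul_of_abs_laplacian_le hf hA hB he₁ ((2 : ℝ)⁻¹ • (x + y))
      (s := ‖x - y‖ / 2) ⟨by positivity, by linarith⟩
    rwa [hx, hy, mul_div_cancel₀ _ two_ne_zero] at h
  · have : (A + B) * 2 ≤ (A + B) * ‖x - y‖ := by gcongr
    linarith [le_of_abs_le (hA x), neg_le_of_abs_le (hA y)]

end MaximumPrinciple

section Sliding

variable {E : Type*} [NormedAddCommGroup E] [InnerProductSpace ℝ E]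

/-- The filter of the far end of `E` in the direction `e`: eventually along it means on some
half-space `{x | M ≤ ⟪e, x⟫}`, so limits along it are uniform in the directions orthogonal to `e`.
The opposite end is `atEnd (-e)`. -/
def atEnd (e : E) : Filter E := comap (fun x ↦ ⟪e, x⟫) atTop

theorem eventually_atEnd_iff {e : E} {p : E → Prop} :
    (∀ᶠ x in atEnd e, p x) ↔ ∃ M, ∀ x, M ≤ ⟪e, x⟫ → p x :=
  (atTop_basis.comap _).eventually_iff.trans (by simp)

theorem tendsto_add_const_atEnd (e τ : E) : Tendsto (fun x ↦ x + τ) (atEnd e) (atEnd e) := by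
  refine tendsto_comap_iff.2 ?_
  simp only [Function.comp_def, inner_add_right]
  exact tendsto_atTop_add_const_right _ _ tendsto_comap

theorem tendsto_add_smul_atEnd {e : E} (he : e ≠ 0) (x : E) :
    Tendsto (fun t : ℝ ↦ x + t • e) atTop (atEnd e) := by
  refine tendsto_comap_iff.2 ?_
  simp only [Function.comp_def, inner_add_right, real_inner_smul_right]
  exact tendsto_atTop_add_const_left _ _ (tendsto_id.atTop_mul_const (real_inner_self_pos.2 he))

/-- `w` is bounded below by a positive constant at bounded distance from every point of each strip
`{x | |⟪e, x⟫| ≤ K}`; by the Harnack-type estimate `exists_pos_forall_le_of_laplacian_le` this is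
what keeps a nonnegative difference of solutions away from `0` on strips. -/
def IsPosNearStrips (e : E) (w : E → ℝ) : Prop :=
  ∀ K : ℝ, ∃ δ > 0, ∃ R, ∀ x, |⟪e, x⟫| ≤ K → ∃ y, ‖x - y‖ ≤ R ∧ δ ≤ w y

theorem isPosNearStrips_of_hyperplane {e : E} {w : E → ℝ} {δ t : ℝ} (he : ‖e‖ = 1) (hδ : 0 < δ)
    (h : ∀ y, ⟪e, y⟫ = t → δ ≤ w y) : IsPosNearStrips e w := by
  refine fun K ↦ ⟨δ, hδ, K + |t|, fun x hx ↦ ⟨x + (t - ⟪e, x⟫) • e, ?_, h _ ?_⟩⟩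
  · rw [sub_add_cancel_left, norm_neg, norm_smul, he, mul_one, Real.norm_eq_abs]
    linarith [abs_sub t ⟪e, x⟫]
  · simp [inner_add_right, real_inner_smul_right, he]

/-- `F` is the nonlinearity of a bistable equation `Δ d = F d` with states in `[-1, 1]`: it is
Lipschitz there, and strictly increasing at a linear rate on the two stable ranges `[-1, -θ]` and
`[θ, 1]`. -/
structure IsBistable (F : ℝ → ℝ) (θ : ℝ) : Prop where
  pos : 0 < θ
  exists_lipschitzOnWith : ∃ K, LipschitzOnWith K F (Icc (-1) 1)
  exists_mul_le_sub : ∃ c > 0, ∀ s ∈ Icc (-1 : ℝ) 1, ∀ t ∈ Icc (-1 : ℝ) 1, s ≤ t →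
    θ ≤ s ∨ t ≤ -θ → c * (t - s) ≤ F t - F s

variable [FiniteDimensional ℝ E]

/-- `d` is a classical entire solution of `Δ d = F d` with values in `[-1, 1]`. -/
structure IsBoundedSolution (F : ℝ → ℝ) (d : E → ℝ) : Prop where
  contDiff : ContDiff ℝ 2 d
  laplacian_eq : ∀ x, Δ d x = F (d x)
  mem_Icc : ∀ x, d x ∈ Icc (-1) 1

/-- `d` is a transition layer in the direction `e`: a solution that lies in the upper stable range
at the end `e` and in the lower stable range at the end `-e`. -/
structure IsLayer (F : ℝ → ℝ) (θ : ℝ) (e : E) (d : E → ℝ) : Prop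
    extends IsBoundedSolution F d where
  eventually_ge : ∀ᶠ x in atEnd e, θ ≤ d x
  eventually_le : ∀ᶠ x in atEnd (-e), d x ≤ -θ

variable {F : ℝ → ℝ} {θ : ℝ} {e : E} {d d₁ d₂ : E → ℝ}

namespace IsBoundedSolution

theorem comp_add_right (hd : IsBoundedSolution F d) (τ : E) :
    IsBoundedSolution F fun x ↦ d (x + τ) where
  contDiff := hd.contDiff.comp (contDiff_id.add contDiff_const)
  laplacian_eq x := (laplacian_comp_add_right d τ x).trans (hd.laplacian_eq _)
  mem_Icc _ := hd.mem_Icc _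

theorem laplacian_sub_eq (hd₁ : IsBoundedSolution F d₁) (hd₂ : IsBoundedSolution F d₂) (x : E) :
    Δ (d₁ - d₂) x = F (d₁ x) - F (d₂ x) := by
  rw [hd₁.contDiff.contDiffAt.laplacian_sub hd₂.contDiff.contDiffAt, hd₁.laplacian_eq,
    hd₂.laplacian_eq]

theorem exists_lipschitzWith (hF : IsBistable F θ) (hd : IsBoundedSolution F d) :
    ∃ K, LipschitzWith K d := by
  obtain ⟨K, hK⟩ := hF.exists_lipschitzOnWith
  obtain ⟨B, hB⟩ := isCompact_Icc.exists_bound_of_continuousOn hK.continuousOn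
  exact ⟨_, lipschitzWith_of_abs_laplacian_le hd.contDiff (fun x ↦ abs_le.2 (hd.mem_Icc x))
    fun x ↦ (hd.laplacian_eq x).symm ▸ hB _ (hd.mem_Icc x)⟩

theorem le_of_le_of_unstable (hF : IsBistable F θ) (hd₁ : IsBoundedSolution F d₁)
    (hd₂ : IsBoundedSolution F d₂) (h : ∀ x, d₁ x < θ → -θ < d₂ x → d₂ x ≤ d₁ x) : d₂ ≤ d₁ := by
  obtain ⟨c, hc, hF'⟩ := hF.exists_mul_le_sub
  refine fun x ↦ sub_nonneg.1 <| nonneg_on_of_laplacian_le (w := d₁ - d₂) (Ω := univ) (B := 2)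
    (hd₁.contDiff.sub hd₂.contDiff) isClosed_univ hc (fun x _ ↦ ?_) (fun x _ hneg ↦ ?_) x
    (mem_univ x)
  · rw [Pi.sub_apply]
    linarith [(hd₁.mem_Icc x).1, (hd₂.mem_Icc x).2]
  · have hlt : d₁ x < d₂ x := sub_neg.1 hneg
    refine ⟨univ_mem, ?_⟩
    have hstable : θ ≤ d₁ x ∨ d₂ x ≤ -θ := by
      by_contra! hunstable
      exact (h x hunstable.1 hunstable.2).not_gt hlt
    rw [hd₁.laplacian_sub_eq hd₂, Pi.sub_apply]
    linarith [hF' _ (hd₁.mem_Icc x) _ (hd₂.mem_Icc x) hlt.le hstable]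

theorem exists_pos_forall_le_sub (hF : IsBistable F θ) (hd₁ : IsBoundedSolution F d₁)
    (hd₂ : IsBoundedSolution F d₂) (hle : d₂ ≤ d₁) (hpos : IsPosNearStrips e (d₁ - d₂)) (K : ℝ) :
    ∃ c > 0, ∀ x, |⟪e, x⟫| ≤ K → c ≤ d₁ x - d₂ x := by
  obtain ⟨δ, hδ, R, hR⟩ := hpos K
  obtain ⟨L, hL⟩ := hF.exists_lipschitzOnWith
  obtain ⟨K₁, hK₁⟩ := hd₁.exists_lipschitzWith hF
  obtain ⟨K₂, hK₂⟩ := hd₂.exists_lipschitzWith hF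
  have hΔ (x : E) : Δ (d₁ - d₂) x ≤ (L + 1) * (d₁ - d₂) x := by
    have hw : 0 ≤ d₁ x - d₂ x := sub_nonneg.2 (hle x)
    have hlip := hL.dist_le_mul _ (hd₁.mem_Icc x) _ (hd₂.mem_Icc x)
    rw [Real.dist_eq, Real.dist_eq, abs_of_nonneg hw] at hlip
    rw [hd₁.laplacian_sub_eq hd₂, Pi.sub_apply]
    linarith [le_abs_self (F (d₁ x) - F (d₂ x))]
  obtain ⟨c, hc, hcle⟩ := exists_pos_forall_le_of_laplacian_le (R := R)
    (hd₁.contDiff.sub hd₂.contDiff) (fun x ↦ sub_nonneg.2 (hle x)) (hK₁.sub hK₂)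
    (by positivity) hΔ hδ
  refine ⟨c, hc, fun x hx ↦ ?_⟩
  obtain ⟨y, hxy, hy⟩ := hR x hx
  exact hcle x y hxy hy

theorem eventually_le_comp_add_right (hF : IsBistable F θ) (hd₁ : IsBoundedSolution F d₁)
    (hd₂ : IsBoundedSolution F d₂) (he : ‖e‖ = 1) (htop : ∀ᶠ x in atEnd e, θ ≤ d₁ x)
    (hbot : ∀ᶠ x in atEnd (-e), d₂ x ≤ -θ) (hle : d₂ ≤ d₁)
    (hpos : IsPosNearStrips e (d₁ - d₂)) : ∀ᶠ τ in 𝓝 (0 : E), d₂ ≤ fun x ↦ d₁ (x + τ) := by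
  obtain ⟨M₁, hM₁⟩ := eventually_atEnd_iff.1 htop
  obtain ⟨M₂, hM₂⟩ := eventually_atEnd_iff.1 hbot
  obtain ⟨c, hc, hcle⟩ := hd₁.exists_pos_forall_le_sub hF hd₂ hle hpos (max (M₁ + 1) M₂)
  obtain ⟨K, hK⟩ := hd₁.exists_lipschitzWith hF
  have hsmall : ∀ᶠ τ in 𝓝 (0 : E), ‖τ‖ < 1 ∧ K * ‖τ‖ < c := by
    refine (Continuous.tendsto' continuous_norm 0 0 norm_zero |>.eventually_lt_const one_pos).and ?_
    exact (Continuous.tendsto' (by fun_prop) 0 0 (by simp)).eventually_lt_const hc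
  filter_upwards [hsmall] with τ ⟨hτ₁, hτc⟩
  refine (hd₁.comp_add_right τ).le_of_le_of_unstable hF hd₂ fun x hx₁ hx₂ ↦ ?_
  have hτ : -1 ≤ ⟪e, τ⟫ := by
    have := abs_real_inner_le_norm e τ
    rw [he, one_mul] at this
    linarith [neg_le_of_abs_le this]
  have hxM₁ : ⟪e, x⟫ ≤ M₁ + 1 := by
    by_contra! hlt
    exact hx₁.not_ge (hM₁ _ (by rw [inner_add_right]; linarith))
  have hxM₂ : -M₂ ≤ ⟪e, x⟫ := by
    by_contra! hlt
    exact hx₂.not_ge (hM₂ x (by rw [inner_neg_left]; linarith))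
  have hstrip := hcle x (abs_le.2 ⟨by linarith [le_max_right (M₁ + 1) M₂], le_max_of_le_left hxM₁⟩)
  have hdist : |d₁ (x + τ) - d₁ x| ≤ K * ‖τ‖ := by
    simpa [Real.dist_eq, dist_eq_norm] using hK.dist_le_mul (x + τ) x
  linarith [neg_le_of_abs_le hdist]

theorem eventually_le_comp_add_smul (hF : IsBistable F θ) (hd₁ : IsBoundedSolution F d₁)
    (hd₂ : IsBoundedSolution F d₂) (he : ‖e‖ = 1) (htop : ∀ᶠ x in atEnd e, θ ≤ d₁ x)
    (hbot : ∀ᶠ x in atEnd (-e), d₂ x ≤ -θ) : ∀ᶠ h : ℝ in atTop, d₂ ≤ fun x ↦ d₁ (x + h • e) := by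
  obtain ⟨M₁, hM₁⟩ := eventually_atEnd_iff.1 htop
  obtain ⟨M₂, hM₂⟩ := eventually_atEnd_iff.1 hbot
  filter_upwards [eventually_ge_atTop (M₁ + M₂)] with h hh
  refine (hd₁.comp_add_right _).le_of_le_of_unstable hF hd₂ fun x hx₁ hx₂ ↦ ?_
  have hxM₁ : ⟪e, x⟫ + h < M₁ := by
    by_contra! hle
    exact hx₁.not_ge (hM₁ _ (by simpa [inner_add_right, real_inner_smul_right, he] using hle))
  refine absurd (hM₂ x ?_) hx₂.not_ge
  rw [inner_neg_left]
  linarith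

theorem le_of_isPosNearStrips (hF : IsBistable F θ) (hd₁ : IsBoundedSolution F d₁)
    (hd₂ : IsBoundedSolution F d₂) (he : ‖e‖ = 1) (htop : ∀ᶠ x in atEnd e, θ ≤ d₁ x)
    (hbot : ∀ᶠ x in atEnd (-e), d₂ x ≤ -θ)
    (hpos : ∀ h : ℝ, 0 ≤ h → (d₂ ≤ fun x ↦ d₁ (x + h • e)) →
      IsPosNearStrips e ((fun x ↦ d₁ (x + h • e)) - d₂)) : d₂ ≤ d₁ := by
  set S : Set ℝ := {h | d₂ ≤ fun x ↦ d₁ (x + h • e)}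
  have hS : IsClosed S := by
    have : S = ⋂ x, {h | d₂ x ≤ d₁ (x + h • e)} := by ext; simp [S, Pi.le_def]
    rw [this]
    exact isClosed_iInter fun x ↦ isClosed_le continuous_const
      (hd₁.contDiff.continuous.comp (by fun_prop))
  obtain ⟨b, hb, hbS⟩ : ∃ b, 0 ≤ b ∧ b ∈ S := ((eventually_ge_atTop 0).and
    (hd₁.eventually_le_comp_add_smul hF hd₂ he htop hbot)).exists
  have hmem : (0 : ℝ) ∈ S := by
    refine (hS.inter isClosed_Icc).mem_of_ge_of_forall_exists_lt hbS hb fun h ⟨hhS, hh⟩ ↦ ?_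
    have hopen := (hd₁.comp_add_right (h • e)).eventually_le_comp_add_right hF hd₂ he
      ((tendsto_add_const_atEnd e _).eventually htop) hbot hhS (hpos h hh.1.le hhS)
    have hline : Tendsto (fun k : ℝ ↦ (k - h) • e) (𝓝[<] h) (𝓝 0) :=
      (Continuous.tendsto' (by fun_prop) h 0 (by simp)).mono_left nhdsWithin_le_nhds
    obtain ⟨k, hk, hk₀⟩ := ((hline.eventually hopen).and (Ico_mem_nhdsLT hh.1)).exists
    refine ⟨k, fun x ↦ (hk x).trans_eq ?_, hk₀⟩
    change d₁ (x + (k - h) • e + h • e) = d₁ (x + k • e)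
    rw [add_assoc, ← add_smul, sub_add_cancel]
  simpa [S] using hmem

end IsBoundedSolution

namespace IsLayer

theorem comp_add_right (hd : IsLayer F θ e d) (τ : E) : IsLayer F θ e fun x ↦ d (x + τ) where
  toIsBoundedSolution := hd.toIsBoundedSolution.comp_add_right τ
  eventually_ge := (tendsto_add_const_atEnd e τ).eventually hd.eventually_ge
  eventually_le := (tendsto_add_const_atEnd (-e) τ).eventually hd.eventually_le

/- Along the chain `x - m • τ, …, x, …, x + m • τ` the values of `d` rise by at least `2 * θ`, so
some link of the chain carries the increment `θ / m`. -/
theorem isPosNearStrips_comp_add_sub (hθ : 0 < θ) (hd : IsLayer F θ e d) {τ : E}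
    (hτ : 0 < ⟪e, τ⟫) : IsPosNearStrips e ((fun x ↦ d (x + τ)) - d) := by
  intro K
  obtain ⟨M₁, hM₁⟩ := eventually_atEnd_iff.1 hd.eventually_ge
  obtain ⟨M₂, hM₂⟩ := eventually_atEnd_iff.1 hd.eventually_le
  obtain ⟨m, hm, hm₀⟩ : ∃ m : ℕ, K + max M₁ M₂ ≤ m * ⟪e, τ⟫ ∧ 0 < m :=
    (((tendsto_natCast_atTop_atTop.atTop_mul_const hτ).eventually_ge_atTop _).and
      (eventually_gt_atTop 0)).exists
  have : (0 : ℝ) < m := Nat.cast_pos.2 hm₀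
  refine ⟨θ / m, by positivity, m * ‖τ‖, fun x hx ↦ ?_⟩
  obtain ⟨hxK₁, hxK₂⟩ := abs_le.1 hx
  set p : ℕ → E := fun i ↦ x + ((i : ℝ) - m) • τ with hp
  have hp_succ (i : ℕ) : p (i + 1) = p i + τ := by
    simp only [hp, Nat.cast_add, Nat.cast_one]
    module
  have hfirst : d (p 0) ≤ -θ := by
    refine hM₂ _ ?_
    simp only [hp, inner_neg_left, inner_add_right, real_inner_smul_right, Nat.cast_zero]
    linarith [le_max_right M₁ M₂]
  have hlast : θ ≤ d (p (2 * m)) := by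
    refine hM₁ _ ?_
    simp only [hp, inner_add_right, real_inner_smul_right, Nat.cast_mul, Nat.cast_ofNat]
    linarith [le_max_left M₁ M₂]
  obtain ⟨i, hi, hiθ⟩ : ∃ i ∈ Finset.range (2 * m), θ / m ≤ d (p (i + 1)) - d (p i) := by
    refine Finset.exists_le_of_sum_le (Finset.nonempty_range_iff.2 (by positivity)) ?_
    rw [Finset.sum_range_sub fun i ↦ d (p i)]
    have : ∑ _i ∈ Finset.range (2 * m), θ / m = 2 * θ := by
      simp only [Finset.sum_const, Finset.card_range, nsmul_eq_mul, Nat.cast_mul, Nat.cast_ofNat]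
      field_simp
    linarith
  refine ⟨p i, ?_, by simpa [hp_succ] using hiθ⟩
  have him : |(i : ℝ) - m| ≤ m := by
    have : (i : ℝ) ≤ 2 * m := by exact_mod_cast (Finset.mem_range.1 hi).le
    exact abs_le.2 ⟨by linarith [Nat.cast_nonneg (α := ℝ) i], by linarith⟩
  rw [sub_add_cancel_left, norm_neg, norm_smul, Real.norm_eq_abs]
  gcongr

theorem le_comp_add_right (hF : IsBistable F θ) (he : ‖e‖ = 1) (hd : IsLayer F θ e d) {τ : E}
    (hτ : 0 < ⟪e, τ⟫) : d ≤ fun x ↦ d (x + τ) := by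
  have hdτ := hd.comp_add_right τ
  refine hdτ.le_of_isPosNearStrips hF hd.toIsBoundedSolution he hdτ.eventually_ge hd.eventually_le
    fun h hh _ ↦ ?_
  have := hd.isPosNearStrips_comp_add_sub hF.pos (τ := h • e + τ) (by
    simp only [inner_add_right, real_inner_smul_right, real_inner_self_eq_norm_sq, he]
    linarith)
  simpa only [add_assoc] using this

theorem eq_of_inner_eq (hF : IsBistable F θ) (he : ‖e‖ = 1) (hd : IsLayer F θ e d) {x y : E}
    (hxy : ⟪e, x⟫ = ⟪e, y⟫) : d x = d y := by
  suffices hle : ∀ x y : E, ⟪e, x⟫ = ⟪e, y⟫ → d x ≤ d y from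
    le_antisymm (hle x y hxy) (hle y x hxy.symm)
  intro x y hxy
  have hlim : Tendsto (fun t : ℝ ↦ d (y + t • e)) (𝓝[>] 0) (𝓝 (d y)) :=
    ((hd.contDiff.continuous.comp (by fun_prop)).tendsto' 0 _ (by simp)).mono_left
      nhdsWithin_le_nhds
  refine ge_of_tendsto hlim (eventually_mem_nhdsWithin.mono fun t ht ↦ ?_)
  have := hd.le_comp_add_right hF he (τ := y - x + t • e)
    (by simpa [inner_add_right, inner_sub_right, real_inner_smul_right, hxy, he] using ht) x
  simpa [← add_assoc] using this

theorem exists_comp_add_smul_eq (hF : IsBistable F θ) (he : ‖e‖ = 1) (hd₁ : IsLayer F θ e d₁)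
    (hd₂ : IsLayer F θ e d₂) : ∃ h : ℝ, ∀ x, d₁ (x + h • e) = d₂ x := by
  by_contra! hne
  have he₀ : e ≠ 0 := norm_ne_zero_iff.1 (he ▸ one_ne_zero)
  have hpos (h : ℝ) (hle : d₂ ≤ fun x ↦ d₁ (x + h • e)) :
      IsPosNearStrips e ((fun x ↦ d₁ (x + h • e)) - d₂) := by
    obtain ⟨y₀, hy₀⟩ := hne h
    have hlt : d₂ y₀ < d₁ (y₀ + h • e) := (hle y₀).lt_of_ne' hy₀
    refine isPosNearStrips_of_hyperplane (t := ⟪e, y₀⟫) he (sub_pos.2 hlt) fun y hy ↦ ?_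
    rw [Pi.sub_apply, (hd₁.comp_add_right _).eq_of_inner_eq hF he hy, hd₂.eq_of_inner_eq hF he hy]
  have hle (h : ℝ) : d₂ ≤ fun x ↦ d₁ (x + h • e) := by
    have hdh := hd₁.comp_add_right (h • e)
    refine hdh.le_of_isPosNearStrips hF hd₂.toIsBoundedSolution he hdh.eventually_ge
      hd₂.eventually_le fun k _ hk ↦ ?_
    simp only [add_assoc, ← add_smul] at hk ⊢
    exact hpos _ hk
  obtain ⟨t, ht⟩ := ((tendsto_add_smul_atEnd he₀ 0).eventually hd₂.eventually_ge).exists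
  obtain ⟨h, hh⟩ := ((tendsto_add_smul_atEnd (neg_ne_zero.2 he₀) (0 + t • e)).eventually
    hd₁.eventually_le).exists
  have := hle (-h) (0 + t • e)
  simp only [neg_smul, smul_neg] at this hh
  linarith [hF.pos]

end IsLayer

theorem IsBoundedSolution.eq_one_of_layer (hF : IsBistable F θ) (he : ‖e‖ = 1)
    (hd₁ : IsBoundedSolution F d₁) (hends : ∀ᶠ x in atEnd e ⊔ atEnd (-e), θ ≤ d₁ x)
    (hd₂ : IsLayer F θ e d₂) (hlim : Tendsto d₂ (atEnd e) (𝓝 1)) (x : E) : d₁ x = 1 := by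
  have he₀ : e ≠ 0 := norm_ne_zero_iff.1 (he ▸ one_ne_zero)
  obtain ⟨htop, hbot⟩ := eventually_sup.1 hends
  have hle (h : ℝ) : (fun x ↦ d₂ (x + h • e)) ≤ d₁ := by
    have hdh := hd₂.comp_add_right (h • e)
    refine hd₁.le_of_isPosNearStrips hF hdh.toIsBoundedSolution he htop hdh.eventually_le
      fun k _ _ ↦ ?_
    obtain ⟨M, hM⟩ := eventually_atEnd_iff.1
      (((tendsto_add_const_atEnd (-e) (k • e)).eventually hbot).and hdh.eventually_le)
    refine isPosNearStrips_of_hyperplane (t := -M) he hF.pos fun y hy ↦ ?_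
    obtain ⟨h₁, h₂⟩ := hM y (by rw [inner_neg_left, hy, neg_neg])
    rw [Pi.sub_apply]
    linarith [hF.pos]
  exact le_antisymm (hd₁.mem_Icc x).2
    (le_of_tendsto (hlim.comp (tendsto_add_smul_atEnd he₀ x)) (.of_forall fun h ↦ hle h x))

end Sliding

section Tanh

theorem hasDerivAt_tanh (x : ℝ) : HasDerivAt Real.tanh (1 - Real.tanh x ^ 2) x := by
  have hquot := (Real.hasDerivAt_sinh x).fun_div (Real.hasDerivAt_cosh x) (Real.cosh_pos x).ne'
  refine (hquot.congr_deriv ?_).congr_of_eventuallyEq (.of_forall Real.tanh_eq_sinh_div_cosh)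
  rw [Real.tanh_eq_sinh_div_cosh]
  field_simp [(Real.cosh_pos x).ne']

theorem tendsto_tanh_atTop : Tendsto Real.tanh atTop (𝓝 1) := by
  have hmono : Monotone Real.tanh := monotone_of_deriv_nonneg
    (fun x ↦ (hasDerivAt_tanh x).differentiableAt) fun x ↦ by
      rw [(hasDerivAt_tanh x).deriv, sub_nonneg, sq_le_one_iff_abs_le_one]
      exact (Real.abs_tanh_lt_one x).le
  refine tendsto_atTop_isLUB hmono ?_
  rw [← image_univ, Real.tanh_bijOn.image_eq]
  exact isLUB_Ioo (by norm_num)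

theorem contDiff_tanh {n : WithTop ℕ∞} : ContDiff ℝ n Real.tanh := by
  have hquot : ContDiff ℝ n fun x ↦ Real.sinh x / Real.cosh x :=
    Real.contDiff_sinh.fun_div Real.contDiff_cosh fun x ↦ (Real.cosh_pos x).ne'
  simpa only [← Real.tanh_eq_sinh_div_cosh] using hquot

end Tanh

section AllenCahn

/-- The Allen–Cahn nonlinearity, with the sign for which the equation reads `Δ d = allenCahn d`. -/
def allenCahn (t : ℝ) : ℝ := t ^ 3 - t

theorem isBistable_allenCahn {θ : ℝ} (hθ₀ : 0 < θ) (hθ : 1 < 3 * θ ^ 2) :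
    IsBistable allenCahn θ where
  pos := hθ₀
  exists_lipschitzOnWith := by
    have hC : ContDiff ℝ 1 allenCahn := (contDiff_id.pow 3).sub contDiff_id
    exact hC.contDiffOn.exists_lipschitzOnWith one_ne_zero (convex_Icc _ _) isCompact_Icc
  exists_mul_le_sub := by
    refine ⟨3 * θ ^ 2 - 1, sub_pos.2 hθ, fun s _ t _ hst hstable ↦ ?_⟩
    have hquad : 3 * θ ^ 2 ≤ s ^ 2 + s * t + t ^ 2 := by
      rcases hstable with hs | ht
      · nlinarith
      · nlinarith
    calc (3 * θ ^ 2 - 1) * (t - s) ≤ (s ^ 2 + s * t + t ^ 2 - 1) * (t - s) := by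
          gcongr
      _ = allenCahn t - allenCahn s := by simp only [allenCahn]; ring

variable {E : Type*} [NormedAddCommGroup E] [InnerProductSpace ℝ E]

/-- The one-dimensional layer of the Allen–Cahn equation, extended to `E` along `e`. -/
def tanhFront (e x : E) : ℝ := Real.tanh (⟪e, x⟫ / √2)

theorem tendsto_tanhFront_atEnd (e : E) : Tendsto (tanhFront e) (atEnd e) (𝓝 1) :=
  tendsto_tanh_atTop.comp ((tendsto_id.atTop_div_const (by positivity)).comp tendsto_comap)

variable [FiniteDimensional ℝ E] {d : E → ℝ} {e : E} {θ : ℝ}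

theorem le_one_of_laplacian_eq_allenCahn (hd : ContDiff ℝ 2 d)
    (hΔ : ∀ x, Δ d x = allenCahn (d x)) (x : E) : d x ≤ 1 := by
  refine sub_nonpos.1 (nonpos_of_cube_le_laplacian (g := fun x ↦ d x - 1)
    (hd.sub contDiff_const) (fun y hy ↦ ?_) x)
  rw [show (fun x ↦ d x - 1) = d - fun _ ↦ 1 from rfl,
    hd.contDiffAt.laplacian_sub contDiffAt_const, laplacian_const, hΔ]
  simp only [allenCahn, Pi.zero_apply]
  nlinarith

theorem isBoundedSolution_allenCahn (hd : ContDiff ℝ 2 d)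
    (hΔ : ∀ x, Δ d x = allenCahn (d x)) : IsBoundedSolution allenCahn d where
  contDiff := hd
  laplacian_eq := hΔ
  mem_Icc x := by
    refine ⟨neg_le.1 (le_one_of_laplacian_eq_allenCahn hd.neg (fun y ↦ ?_) x),
      le_one_of_laplacian_eq_allenCahn hd hΔ x⟩
    rw [show (fun x ↦ -d x) = -d from rfl, laplacian_neg, Pi.neg_apply, hΔ]
    simp only [allenCahn]
    ring

theorem laplacian_tanhFront (he : ‖e‖ = 1) (x : E) :
    Δ (tanhFront e) x = allenCahn (tanhFront e x) := by
  have hderiv (t : ℝ) : HasDerivAt (fun t ↦ Real.tanh (t / √2))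
      ((1 - Real.tanh (t / √2) ^ 2) * (1 / √2)) t :=
    (hasDerivAt_tanh _).comp t ((hasDerivAt_id t).div_const _)
  have hderiv' (t : ℝ) : HasDerivAt (fun t ↦ (1 - Real.tanh (t / √2) ^ 2) * (1 / √2))
      (allenCahn (Real.tanh (t / √2))) t := by
    refine ((((hderiv t).fun_pow 2).const_sub 1).mul_const (1 / √2)).congr_deriv ?_
    have hsq : √2 ^ 2 = 2 := Real.sq_sqrt (by norm_num)
    simp only [allenCahn]
    field_simp
    rw [hsq]
    ring
  exact (laplacian_comp_inner (.of_forall hderiv) (hderiv' _)).trans (by simp [he, tanhFront])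

theorem isLayer_tanhFront (he : ‖e‖ = 1) (hθ : θ < 1) : IsLayer allenCahn θ e (tanhFront e) where
  contDiff := contDiff_tanh.comp ((contDiff_const.inner ℝ contDiff_id).div_const _)
  laplacian_eq := laplacian_tanhFront he
  mem_Icc _ := ⟨(Real.neg_one_lt_tanh _).le, (Real.tanh_lt_one _).le⟩
  eventually_ge := (tendsto_tanhFront_atEnd e).eventually (Ici_mem_nhds hθ)
  eventually_le := by
    filter_upwards [(tendsto_tanhFront_atEnd (-e)).eventually (Ici_mem_nhds hθ)] with x hx
    rw [tanhFront, inner_neg_left, neg_div, Real.tanh_neg] at hx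
    exact le_neg.1 hx

theorem exists_eq_tanh_of_isLayer (hθ₀ : 0 < θ) (hθ : 1 < 3 * θ ^ 2) (hθ₁ : θ < 1) (he : ‖e‖ = 1)
    (hd : IsLayer allenCahn θ e d) : ∃ α : ℝ, ∀ x, d x = Real.tanh ((⟪e, x⟫ + α) / √2) := by
  obtain ⟨α, hα⟩ := (isLayer_tanhFront he hθ₁).exists_comp_add_smul_eq
    (isBistable_allenCahn hθ₀ hθ) he hd
  refine ⟨α, fun x ↦ ?_⟩
  rw [← hα, tanhFront, inner_add_right, real_inner_smul_right, real_inner_self_eq_norm_sq, he,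
    one_pow, mul_one]

end AllenCahn

section System

theorem lap_eq_laplacian {N : ℕ} {f : EuclideanSpace ℝ (Fin N) → ℝ} (hf : ContDiff ℝ 2 f)
    (x : EuclideanSpace ℝ (Fin N)) : lap N f x = Δ f x := by
  have hfderiv : DifferentiableAt ℝ (fderiv ℝ f) x :=
    (hf.fderiv_right (m := 1) le_rfl).contDiffAt.differentiableAt one_ne_zero
  rw [laplacian_eq_iteratedFDeriv_orthonormalBasis f (EuclideanSpace.basisFun (Fin N) ℝ)]
  refine Finset.sum_congr rfl fun i _ ↦ ?_
  rw [fderiv_clm_apply hfderiv (differentiableAt_const _), iteratedFDeriv_two_apply]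
  simp

theorem inner_single_one_left {N : ℕ} (i : Fin N) (x : EuclideanSpace ℝ (Fin N)) :
    ⟪EuclideanSpace.single i (1 : ℝ), x⟫ = x i := by
  simp [EuclideanSpace.inner_single_left]

namespace IsSolution

variable {N : ℕ} {Λ : ℝ} {u v : EuclideanSpace ℝ (Fin N) → ℝ}

theorem neg_laplacian_fst (h : IsSolution N Λ u v) (x : EuclideanSpace ℝ (Fin N)) :
    -Δ u x = u x - u x ^ 3 - Λ * u x * v x ^ 2 :=
  lap_eq_laplacian h.1 x ▸ h.2.2.1 x

theorem neg_laplacian_snd (h : IsSolution N Λ u v) (x : EuclideanSpace ℝ (Fin N)) :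
    -Δ v x = v x - v x ^ 3 - Λ * u x ^ 2 * v x :=
  lap_eq_laplacian h.2.1 x ▸ h.2.2.2 x

end IsSolution

namespace Hinf

variable {N : ℕ} {u v : EuclideanSpace ℝ (Fin (N + 1)) → ℝ} {ε θ : ℝ}

theorem eventually_atEnd (h : Hinf N u v) (hε : 0 < ε) :
    ∀ᶠ x in atEnd (EuclideanSpace.single (Fin.last N) (1 : ℝ)), |u x - 1| < ε ∧ |v x| < ε := by
  obtain ⟨M, hM⟩ := h.1 ε hε
  exact eventually_atEnd_iff.2 ⟨M, fun x hx ↦ hM x (by rwa [inner_single_one_left] at hx)⟩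

theorem eventually_atEnd_neg (h : Hinf N u v) (hε : 0 < ε) :
    ∀ᶠ x in atEnd (-EuclideanSpace.single (Fin.last N) (1 : ℝ)), |u x| < ε ∧ |v x - 1| < ε := by
  obtain ⟨M, hM⟩ := h.2 ε hε
  refine eventually_atEnd_iff.2 ⟨-M, fun x hx ↦ hM x ?_⟩
  rwa [inner_neg_left, inner_single_one_left, neg_le_neg_iff] at hx

theorem eventually_le_add (h : Hinf N u v) (hθ : θ < 1) :
    ∀ᶠ x in atEnd (EuclideanSpace.single (Fin.last N) (1 : ℝ)) ⊔
      atEnd (-EuclideanSpace.single (Fin.last N) (1 : ℝ)), θ ≤ u x + v x := by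
  have hε : 0 < (1 - θ) / 2 := by linarith
  refine eventually_sup.2 ⟨(h.eventually_atEnd hε).mono fun x hx ↦ ?_,
    (h.eventually_atEnd_neg hε).mono fun x hx ↦ ?_⟩ <;>
  linarith [(abs_lt.1 hx.1).1, (abs_lt.1 hx.2).1]

theorem eventually_le_sub (h : Hinf N u v) (hθ : θ < 1) :
    ∀ᶠ x in atEnd (EuclideanSpace.single (Fin.last N) (1 : ℝ)), θ ≤ u x - v x := by
  refine (h.eventually_atEnd (ε := (1 - θ) / 2) (by linarith)).mono fun x hx ↦ ?_
  linarith [(abs_lt.1 hx.1).1, (abs_lt.1 hx.2).2]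

theorem eventually_sub_le (h : Hinf N u v) (hθ : θ < 1) :
    ∀ᶠ x in atEnd (-EuclideanSpace.single (Fin.last N) (1 : ℝ)), u x - v x ≤ -θ := by
  refine (h.eventually_atEnd_neg (ε := (1 - θ) / 2) (by linarith)).mono fun x hx ↦ ?_
  linarith [(abs_lt.1 hx.1).2, (abs_lt.1 hx.2).1]

end Hinf

theorem stmt_8_general {E : Type*} [NormedAddCommGroup E] [InnerProductSpace ℝ E]
    [FiniteDimensional ℝ E] {e : E} (he : ‖e‖ = 1) {u v : E → ℝ} (hu : ContDiff ℝ 2 u)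
    (hv : ContDiff ℝ 2 v) (hΔu : ∀ x, -Δ u x = u x - u x ^ 3 - 3 * u x * v x ^ 2)
    (hΔv : ∀ x, -Δ v x = v x - v x ^ 3 - 3 * u x ^ 2 * v x) {θ : ℝ} (hθ₀ : 0 < θ)
    (hθ : 1 < 3 * θ ^ 2) (hθ₁ : θ < 1) (hadd_ends : ∀ᶠ x in atEnd e ⊔ atEnd (-e), θ ≤ u x + v x)
    (hsub_top : ∀ᶠ x in atEnd e, θ ≤ u x - v x) (hsub_bot : ∀ᶠ x in atEnd (-e), u x - v x ≤ -θ) :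
    ∃ α : ℝ, ∀ x, u x = (1 + Real.tanh ((⟪e, x⟫ + α) / √2)) / 2 ∧
      v x = (1 - Real.tanh ((⟪e, x⟫ + α) / √2)) / 2 := by
  have hadd : IsBoundedSolution allenCahn (u + v) := by
    refine isBoundedSolution_allenCahn (hu.add hv) fun x ↦ ?_
    rw [hu.contDiffAt.laplacian_add hv.contDiffAt, allenCahn, Pi.add_apply]
    linear_combination -hΔu x - hΔv x
  have hsub : IsBoundedSolution allenCahn (u - v) := by
    refine isBoundedSolution_allenCahn (hu.sub hv) fun x ↦ ?_
    rw [hu.contDiffAt.laplacian_sub hv.contDiffAt, allenCahn, Pi.sub_apply]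
    linear_combination hΔv x - hΔu x
  have hone (x : E) : u x + v x = 1 := hadd.eq_one_of_layer (isBistable_allenCahn hθ₀ hθ) he
    hadd_ends (isLayer_tanhFront he hθ₁) (tendsto_tanhFront_atEnd e) x
  obtain ⟨α, hα⟩ := exists_eq_tanh_of_isLayer hθ₀ hθ hθ₁ he
    { hsub with eventually_ge := hsub_top, eventually_le := hsub_bot }
  refine ⟨α, fun x ↦ ?_⟩
  rw [← hα x, Pi.sub_apply]
  constructor <;> linarith [hone x]

end System

/-- Theorem 1.8: for `Λ = 3`, complete classification of the
(possibly sign-changing) solutions satisfying `(h∞)`: they are the explicit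
one-dimensional `tanh`-profiles, unique up to translations. -/
theorem stmt_8 (N : ℕ)
    (u v : EuclideanSpace ℝ (Fin (N + 1)) → ℝ)
    (hsol : IsSolution (N + 1) 3 u v)
    (hinf : Hinf N u v) :
    ∃ α : ℝ, ∀ x : EuclideanSpace ℝ (Fin (N + 1)),
      u x = (1 + Real.tanh ((x (Fin.last N) + α) / Real.sqrt 2)) / 2 ∧
      v x = (1 - Real.tanh ((x (Fin.last N) + α) / Real.sqrt 2)) / 2 := by
  simpa only [inner_single_one_left] using
    stmt_8_general (e := EuclideanSpace.single (Fin.last N) 1) (by simp) hsol.1 hsol.2.1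
      hsol.neg_laplacian_fst hsol.neg_laplacian_snd (θ := 9 / 10) (by norm_num) (by norm_num)
      (by norm_num) (hinf.eventually_le_add (by norm_num)) (hinf.eventually_le_sub (by norm_num))
      (hinf.eventually_sub_le (by norm_num))
end
end

section
/- Let θ > 0 and γ > 0 satisfy θ < 2^(−γ), and let R₀ > 0 and C > 0. Let 𝓛 : (R₀, +∞) → ℝ be a nonnegative and nondecreasing function and g : (R₀, +∞) → ℝ a nonnegative function with g(R) → 0 as R → +∞, such that for every R > R₀ one has 𝓛(R) ≤ θ 𝓛(2R) + g(R) and 𝓛(R) ≤ C R^γ. Then 𝓛(R) = 0 for every R > R₀. -/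
open scoped RealInnerProductSpace
open Filter

noncomputable section

/-!
For `ε > 0`, the function `v = L - ε` satisfies `v R ≤ θ * v (b * R)` as soon as
`g R ≤ (1 - θ) * ε`, so `v R ≤ θ ^ n * v (b ^ n * R)` for large `R` and every `n`. The growth bound
makes the right-hand side `O((θ * b ^ γ) ^ n)`, which tends to `0` because `θ < b ^ (-γ)`; hence
`L ≤ ε` near infinity. A nonnegative nondecreasing function that tends to `0` vanishes.

This argument needs `0 ≤ θ < 1` and `0 ≤ γ`. As `L` is nonnegative, a negative `θ` can be replaced
by `0`, and if `γ < 0` the growth bound alone gives `L → 0`.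
-/

open Asymptotics Set
open scoped Topology

theorem le_pow_mul_iterate {α M : Type*} [MonoidWithZero M] [Preorder M] [PosMulMono M]
    {f : α → α} {s : Set α} {v : α → M} {θ : M} (hf : MapsTo f s s) (hθ : 0 ≤ θ)
    (hv : ∀ x ∈ s, v x ≤ θ * v (f x)) (n : ℕ) {x : α} (hx : x ∈ s) :
    v x ≤ θ ^ n * v (f^[n] x) := by
  induction n generalizing x with
  | zero => simp
  | succ n ih =>
    calc
      v x ≤ θ * v (f x) := hv x hx
      _ ≤ θ * (θ ^ n * v (f^[n] (f x))) := mul_le_mul_of_nonneg_left (ih (hf hx)) hθ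
      _ = θ ^ (n + 1) * v (f^[n + 1] x) := by
        rw [pow_succ', mul_assoc, Function.iterate_succ_apply]

section GeometricScaling

variable {b θ γ : ℝ}

theorem tendsto_pow_smul_of_isBigO_rpow {E : Type*} [NormedAddCommGroup E] [NormedSpace ℝ E]
    {v : ℝ → E} (hb : 1 < b) (hθγ : |θ| < b ^ (-γ)) (hv : v =O[atTop] fun R => R ^ γ)
    {R : ℝ} (hR : 0 < R) :
    Tendsto (fun n : ℕ => θ ^ n • v (b ^ n * R)) atTop (𝓝 0) := by
  have hb₀ : 0 < b := one_pos.trans hb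
  have hratio : |θ * b ^ γ| < 1 := by
    rwa [abs_mul, abs_of_pos (Real.rpow_pos_of_pos hb₀ γ),
      ← lt_inv_mul_iff₀' (Real.rpow_pos_of_pos hb₀ γ), mul_one, ← Real.rpow_neg hb₀.le]
  have hscale : Tendsto (fun n : ℕ => b ^ n * R) atTop atTop :=
    (tendsto_pow_atTop_atTop_of_one_lt hb).atTop_mul_const hR
  refine ((isBigO_refl (fun n : ℕ => θ ^ n) atTop).smul (hv.comp_tendsto hscale)).trans_tendsto ?_
  have hgeom (n : ℕ) : θ ^ n * (b ^ n * R) ^ γ = (θ * b ^ γ) ^ n * R ^ γ := by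
    rw [Real.mul_rpow (pow_nonneg hb₀.le n) hR.le, ← Real.rpow_pow_comm hb₀.le, mul_pow, mul_assoc]
  simpa only [Function.comp_apply, smul_eq_mul, hgeom, zero_mul] using
    (tendsto_pow_atTop_nhds_zero_of_abs_lt_one hratio).mul_const (R ^ γ)

theorem eventually_nonpos_of_le_mul_comp_mul {v : ℝ → ℝ} (hb : 1 < b) (hθ : 0 ≤ θ)
    (hθγ : θ < b ^ (-γ)) (hv : ∀ᶠ R in atTop, v R ≤ θ * v (b * R))
    (hgrowth : v =O[atTop] fun R => R ^ γ) :
    ∀ᶠ R in atTop, v R ≤ 0 := by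
  obtain ⟨S, hS⟩ := eventually_atTop.mp (hv.and (eventually_gt_atTop 0))
  have hmaps : MapsTo (b * ·) (Ici S) (Ici S) := fun R hR =>
    hR.trans (le_mul_of_one_le_left (hS R hR).2.le hb.le)
  filter_upwards [eventually_ge_atTop S] with R hR
  refine ge_of_tendsto' (tendsto_pow_smul_of_isBigO_rpow hb (by rwa [abs_of_nonneg hθ]) hgrowth
    (hS R hR).2) fun n => ?_
  simpa only [mul_left_iterate, smul_eq_mul] using
    le_pow_mul_iterate hmaps hθ (fun T hT => (hS T hT).1) n hR

theorem eventually_le_of_le_mul_comp_mul_add {L g : ℝ → ℝ} (hb : 1 < b) (hθ : 0 ≤ θ)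
    (hγ : 0 ≤ γ) (hθγ : θ < b ^ (-γ)) (hg : Tendsto g atTop (𝓝 0))
    (hL : ∀ᶠ R in atTop, L R ≤ θ * L (b * R) + g R)
    (hgrowth : L =O[atTop] fun R => R ^ γ) {ε : ℝ} (hε : 0 < ε) :
    ∀ᶠ R in atTop, L R ≤ ε := by
  have hθ₁ : θ < 1 := hθγ.trans_le (Real.rpow_le_one_of_one_le_of_nonpos hb.le (neg_nonpos.2 hγ))
  have hconst : (fun _ => ε) =O[atTop] fun R : ℝ => R ^ γ := .of_bound ε <| by
    filter_upwards [eventually_ge_atTop 1] with R hR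
    rw [Real.norm_of_nonneg hε.le]
    exact le_mul_of_one_le_right hε.le ((Real.one_le_rpow hR hγ).trans (le_abs_self _))
  have hshift : ∀ᶠ R in atTop, L R - ε ≤ θ * (L (b * R) - ε) := by
    filter_upwards [hL, hg.eventually_le_const (mul_pos (sub_pos.2 hθ₁) hε)] with R hLR hgR
    linarith
  filter_upwards [eventually_nonpos_of_le_mul_comp_mul hb hθ hθγ hshift (hgrowth.sub hconst)]
    with R hR using sub_nonpos.1 hR

theorem tendsto_zero_of_le_mul_comp_mul_add {L g : ℝ → ℝ} (hb : 1 < b) (hθγ : θ < b ^ (-γ))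
    (hL₀ : ∀ᶠ R in atTop, 0 ≤ L R) (hg : Tendsto g atTop (𝓝 0))
    (hL : ∀ᶠ R in atTop, L R ≤ θ * L (b * R) + g R)
    (hgrowth : L =O[atTop] fun R => R ^ γ) :
    Tendsto L atTop (𝓝 0) := by
  have hb₀ : 0 < b := one_pos.trans hb
  rcases lt_or_ge γ 0 with hγ | hγ
  · exact hgrowth.trans_tendsto (by simpa using tendsto_rpow_neg_atTop (neg_pos.2 hγ))
  have hL_max : ∀ᶠ R in atTop, L R ≤ max θ 0 * L (b * R) + g R := by
    filter_upwards [hL, (tendsto_id.const_mul_atTop hb₀).eventually hL₀] with R hLR hLbR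
    exact hLR.trans (add_le_add_left (mul_le_mul_of_nonneg_right (le_max_left θ 0) hLbR) _)
  have hθγ_max : max θ 0 < b ^ (-γ) := max_lt hθγ (Real.rpow_pos_of_pos hb₀ _)
  refine tendsto_order.2 ⟨fun a ha => hL₀.mono fun R hR => ha.trans_le hR, fun a ha => ?_⟩
  exact (eventually_le_of_le_mul_comp_mul_add hb (le_max_right θ 0) hγ hθγ_max hg hL_max hgrowth
    (half_pos ha)).mono fun R hR => hR.trans_lt (half_lt_self ha)

theorem stmt_14_general {R₀ C : ℝ} {L g : ℝ → ℝ} (hb : 1 < b) (hθγ : θ < b ^ (-γ))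
    (hL_nonneg : ∀ R, R₀ < R → 0 ≤ L R) (hL_mono : MonotoneOn L (Ioi R₀))
    (hg_lim : Tendsto g atTop (𝓝 0)) (h_iter : ∀ᶠ R in atTop, L R ≤ θ * L (b * R) + g R)
    (h_growth : ∀ᶠ R in atTop, L R ≤ C * R ^ γ) :
    ∀ R, R₀ < R → L R = 0 := by
  have hL₀ : ∀ᶠ R in atTop, 0 ≤ L R := (eventually_gt_atTop R₀).mono hL_nonneg
  have hgrowth : L =O[atTop] fun R => R ^ γ := .of_bound C <| by
    filter_upwards [hL₀, h_growth, eventually_ge_atTop 0] with R hLR hCR hR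
    rwa [Real.norm_of_nonneg hLR, Real.norm_of_nonneg (Real.rpow_nonneg hR γ)]
  have hlim := tendsto_zero_of_le_mul_comp_mul_add hb hθγ hL₀ hg_lim h_iter hgrowth
  intro R hR
  refine le_antisymm (ge_of_tendsto hlim ?_) (hL_nonneg R hR)
  filter_upwards [eventually_ge_atTop R] with S hRS using hL_mono hR (hR.trans_le hRS) hRS

end GeometricScaling

/-- Lemma 3.2: the iteration lemma for the quantity `𝓛`. -/
theorem stmt_14 (θ γ R₀ C : ℝ) (hθ : 0 < θ) (hγ : 0 < γ)
    (hθγ : θ < (2 : ℝ) ^ (-γ)) (hR₀ : 0 < R₀) (hC : 0 < C)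
    (L g : ℝ → ℝ)
    (hL_nonneg : ∀ R, R₀ < R → 0 ≤ L R)
    (hL_mono : ∀ R₁ R₂, R₀ < R₁ → R₁ ≤ R₂ → L R₁ ≤ L R₂)
    (hg_nonneg : ∀ R, R₀ < R → 0 ≤ g R)
    (hg_lim : Filter.Tendsto g Filter.atTop (nhds 0))
    (h_iter : ∀ R, R₀ < R → L R ≤ θ * L (2 * R) + g R)
    (h_growth : ∀ R, R₀ < R → L R ≤ C * R ^ γ) :
    ∀ R, R₀ < R → L R = 0 := by
  exact stmt_14_general one_lt_two hθγ hL_nonneg (fun R₁ hR₁ R₂ _ => hL_mono R₁ R₂ hR₁) hg_lim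
    ((eventually_gt_atTop R₀).mono h_iter) ((eventually_gt_atTop R₀).mono h_growth)
end
end
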